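/- Let u ∈ W^{1,p}(D_2(0),S^1) be a stationary p-harmonic map on the Euclidean disk D_2(0) ⊂ ℝ², p ∈ (1,2). Then for any annulus A_{r_1,r_2}(a) = D_{r_2}(a) ∖ D_{r_1}(a) ⊂ D_2(0), the Pohozaev-type identity ∫_{r_1}^{r_2} ( ∫_{D_r(a)} (2−p)|du|^p ) dr = ∫_{A_{r_1,r_2}(a)} |z−a| ( |du|^p − p|du|^{p−2} |du((z−a)/|z−a|)|² ) dz holds. -/

import Mathlib

open MeasureTheory Metric Filter Topology Set
open scoped ENNReal NNReal

noncomputable section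

/-- The Hilbert–Schmidt norm of an `ℝ`-linear map `ℂ → ℂ`: for the differential `du` of
a map on the plane `ℝ² ≃ ℂ` this is the pointwise energy density norm `|du|`. -/
def hsNorm (T : ℂ →L[ℝ] ℂ) : ℝ := Real.sqrt (‖T 1‖ ^ 2 + ‖T Complex.I‖ ^ 2)

/-- The real inner product on `ℂ ≃ ℝ²`. -/
def rinner (a b : ℂ) : ℝ := ((starRingEnd ℂ) a * b).re

/-- The one-form `ju = u¹du² - u²du¹`, evaluated at `z` on the vector `w`. -/
def jform (u : ℂ → ℂ) (du : ℂ → ℂ →L[ℝ] ℂ) (z w : ℂ) : ℝ :=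
  ((starRingEnd ℂ) (u z) * du z w).im

/-- A smooth real-valued test function compactly supported in `Ω`. -/
def IsTest (Ω : Set ℂ) (φ : ℂ → ℝ) : Prop :=
  ContDiff ℝ (⊤ : ℕ∞) φ ∧ HasCompactSupport φ ∧ tsupport φ ⊆ Ω

/-- A smooth vector field compactly supported in `Ω`. -/
def IsTestVF (Ω : Set ℂ) (X : ℂ → ℂ) : Prop :=
  ContDiff ℝ (⊤ : ℕ∞) X ∧ HasCompactSupport X ∧ tsupport X ⊆ Ω

/-- `du` is the weak (distributional) differential of `u` on `Ω`. -/
def IsWeakDeriv (Ω : Set ℂ) (u : ℂ → ℂ) (du : ℂ → ℂ →L[ℝ] ℂ) : Prop :=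
  ∀ φ : ℂ → ℝ, IsTest Ω φ → ∀ w : ℂ,
    (∫ z in Ω, fderiv ℝ φ z w • u z) = -∫ z in Ω, φ z • du z w

/-- `u ∈ W^{1,p}(Ω,S¹)`, with weak differential `du`: `u` is an `S¹`-valued map
(`|u| = 1` a.e.) with `|du| ∈ L^p(Ω)`. -/
def MemW1pS1 (p : ℝ) (Ω : Set ℂ) (u : ℂ → ℂ) (du : ℂ → ℂ →L[ℝ] ℂ) : Prop :=
  (∀ᵐ z ∂(volume.restrict Ω), ‖u z‖ = 1) ∧
  AEStronglyMeasurable u (volume.restrict Ω) ∧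
  AEStronglyMeasurable du (volume.restrict Ω) ∧
  Integrable (fun z => hsNorm (du z) ^ p) (volume.restrict Ω) ∧
  IsWeakDeriv Ω u du

/-- The basis `(1, i)` of `ℂ` over `ℝ`. -/
def cb : Fin 2 → ℂ := ![1, Complex.I]

/-- `u` is weakly `p`-harmonic on `Ω`: `div(|du|^{p-2} ju) = 0` distributionally. -/
def WeaklyPHarm (p : ℝ) (Ω : Set ℂ) (u : ℂ → ℂ) (du : ℂ → ℂ →L[ℝ] ℂ) : Prop :=
  ∀ ψ : ℂ → ℝ, IsTest Ω ψ →
    (∫ z in Ω, hsNorm (du z) ^ (p - 2) *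
      ∑ i : Fin 2, jform u du z (cb i) * fderiv ℝ ψ z (cb i)) = 0

/-- `u` is stationary `p`-harmonic on `Ω`: weakly `p`-harmonic and critical for inner
variations, `∫ |du|^p div X - p |du|^{p-2} ⟨du^* du, ∇X⟩ = 0` for every smooth
compactly supported vector field `X`. -/
def StatPHarm (p : ℝ) (Ω : Set ℂ) (u : ℂ → ℂ) (du : ℂ → ℂ →L[ℝ] ℂ) : Prop :=
  WeaklyPHarm p Ω u du ∧
  ∀ X : ℂ → ℂ, IsTestVF Ω X →
    (∫ z in Ω,
      (hsNorm (du z) ^ p * ∑ i : Fin 2, rinner (cb i) (fderiv ℝ X z (cb i)) -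
        p * hsNorm (du z) ^ (p - 2) *
          ∑ i : Fin 2, ∑ j : Fin 2,
            rinner (du z (cb i)) (du z (cb j)) * rinner (cb j) (fderiv ℝ X z (cb i)))) = 0

/-- The singular set of `u` in `Ω`: the set of points of `Ω` near which `u` fails
to be `C¹`. -/
def SingSet (Ω : Set ℂ) (u : ℂ → ℂ) : Set ℂ :=
  {x ∈ Ω | ¬∃ V ∈ 𝓝 x, ContDiffOn ℝ 1 u V}

end


/-- smooth cutoff -/
noncomputable def poCut (r₁ r₂ N : ℝ) (t : ℝ) : ℝ :=
  Real.smoothTransition (N * (t - r₁) - 1) * Real.smoothTransition (N * (r₂ - t) - 1)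

/-- primitive of the cutoff -/
noncomputable def poEta (r₁ r₂ N : ℝ) (s : ℝ) : ℝ := ∫ t in s..r₂, poCut r₁ r₂ N t

lemma poCut_contDiff (r₁ r₂ N : ℝ) : ContDiff ℝ (⊤ : ℕ∞) (poCut r₁ r₂ N) := by
  unfold poCut
  apply ContDiff.mul
  · exact Real.smoothTransition.contDiff.comp (by fun_prop)
  · exact Real.smoothTransition.contDiff.comp (by fun_prop)

lemma poCut_nonneg (r₁ r₂ N t : ℝ) : 0 ≤ poCut r₁ r₂ N t :=
  mul_nonneg (Real.smoothTransition.nonneg _) (Real.smoothTransition.nonneg _)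

lemma poCut_le_one (r₁ r₂ N t : ℝ) : poCut r₁ r₂ N t ≤ 1 :=
  mul_le_one₀ (Real.smoothTransition.le_one _) (Real.smoothTransition.nonneg _)
    (Real.smoothTransition.le_one _)

lemma poCut_left {r₁ r₂ N t : ℝ} (h : N * (t - r₁) ≤ 1) : poCut r₁ r₂ N t = 0 := by
  unfold poCut
  rw [Real.smoothTransition.zero_of_nonpos (by linarith), zero_mul]

lemma poCut_right {r₁ r₂ N t : ℝ} (h : N * (r₂ - t) ≤ 1) : poCut r₁ r₂ N t = 0 := by
  unfold poCut
  rw [Real.smoothTransition.zero_of_nonpos (x := N * (r₂ - t) - 1) (by linarith), mul_zero]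

lemma poCut_tendsto (r₁ r₂ t : ℝ) (h2 : t ≠ r₂) :
    Tendsto (fun n : ℕ => poCut r₁ r₂ ((n : ℝ) + 1) t) atTop
      (𝓝 ((Ioc r₁ r₂).indicator (fun _ => (1 : ℝ)) t)) := by
  by_cases h : t ∈ Ioc r₁ r₂
  · rw [indicator_of_mem h]
    have hlt : t < r₂ := lt_of_le_of_ne h.2 h2
    have key : ∀ c : ℝ, 0 < c → ∀ᶠ n : ℕ in atTop, 2 ≤ ((n : ℝ) + 1) * c := by
      intro c hc
      have : Tendsto (fun n : ℕ => ((n : ℝ) + 1) * c) atTop atTop :=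
        (tendsto_atTop_add_const_right _ _ tendsto_natCast_atTop_atTop).atTop_mul_const hc
      exact this.eventually_ge_atTop 2
    refine tendsto_const_nhds.congr' ?_
    filter_upwards [key _ (sub_pos.2 h.1), key _ (sub_pos.2 hlt)] with n h3 h4
    unfold poCut
    rw [Real.smoothTransition.one_of_one_le (by linarith),
      Real.smoothTransition.one_of_one_le (by linarith), mul_one]
  · rw [indicator_of_notMem h]
    refine tendsto_const_nhds.congr ?_
    intro n
    have hn : (0 : ℝ) ≤ (n : ℝ) := Nat.cast_nonneg n
    rw [mem_Ioc, not_and_or, not_lt, not_le] at h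
    rcases h with h | h
    · rw [poCut_left]; nlinarith
    · rw [poCut_right]; nlinarith

lemma poEta_hasDerivAt (r₁ r₂ N s : ℝ) :
    HasDerivAt (poEta r₁ r₂ N) (-poCut r₁ r₂ N s) s := by
  have hc := (poCut_contDiff r₁ r₂ N).continuous
  exact intervalIntegral.integral_hasDerivAt_left (hc.intervalIntegrable _ _)
    (hc.stronglyMeasurableAtFilter _ _) hc.continuousAt

lemma poEta_contDiff (r₁ r₂ N : ℝ) : ContDiff ℝ (⊤ : ℕ∞) (poEta r₁ r₂ N) := by
  rw [contDiff_infty_iff_deriv]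
  refine ⟨fun s => (poEta_hasDerivAt r₁ r₂ N s).differentiableAt, ?_⟩
  have : deriv (poEta r₁ r₂ N) = fun s => -poCut r₁ r₂ N s :=
    funext fun s => (poEta_hasDerivAt r₁ r₂ N s).deriv
  rw [this]
  exact (poCut_contDiff r₁ r₂ N).neg

lemma poEta_bound (r₁ r₂ N s : ℝ) : |poEta r₁ r₂ N s| ≤ |r₂ - s| := by
  have := intervalIntegral.norm_integral_le_of_norm_le_const (a := s) (b := r₂)
    (f := poCut r₁ r₂ N) (C := 1) (fun t _ => by
      rw [Real.norm_eq_abs, abs_of_nonneg (poCut_nonneg _ _ _ _)]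
      exact poCut_le_one _ _ _ _)
  simpa [poEta] using this

lemma poEta_right {r₁ r₂ N s : ℝ} (hN : 0 < N) (h : N * (r₂ - s) ≤ 1) :
    poEta r₁ r₂ N s = 0 := by
  unfold poEta
  apply intervalIntegral.integral_zero_ae
  refine ae_of_all _ fun t ht => poCut_right ?_
  rw [mem_uIoc] at ht
  rcases ht with ht | ht <;> nlinarith [ht.1, ht.2]

lemma poEta_left {r₁ r₂ N s : ℝ} (hN : 0 < N) (hr : 0 ≤ r₁) (hs : 0 ≤ s) (h : N * s ≤ 1) :
    poEta r₁ r₂ N s = poEta r₁ r₂ N 0 := by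
  have hc := (poCut_contDiff r₁ r₂ N).continuous
  have h1 := intervalIntegral.integral_add_adjacent_intervals
    (hc.intervalIntegrable (μ := volume) 0 s) (hc.intervalIntegrable s r₂)
  have h0 : ∫ t in (0 : ℝ)..s, poCut r₁ r₂ N t = 0 := by
    apply intervalIntegral.integral_zero_ae
    refine ae_of_all _ fun t ht => poCut_left ?_
    rw [uIoc_of_le hs] at ht
    nlinarith [ht.1, ht.2]
  unfold poEta
  linarith

lemma poEta_tendsto (r₁ r₂ s : ℝ) :
    Tendsto (fun n : ℕ => poEta r₁ r₂ ((n : ℝ) + 1) s) atTop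
      (𝓝 (∫ t in Ioc r₁ r₂, (Ioi s).indicator (fun _ => (1 : ℝ)) t)) := by
  have hlim : Tendsto (fun n : ℕ => poEta r₁ r₂ ((n : ℝ) + 1) s) atTop
      (𝓝 (∫ t in s..r₂, (Ioc r₁ r₂).indicator (fun _ => (1 : ℝ)) t)) := by
    apply intervalIntegral.tendsto_integral_filter_of_dominated_convergence (fun _ => (1 : ℝ))
    · exact Eventually.of_forall fun n =>
        (poCut_contDiff r₁ r₂ _).continuous.aestronglyMeasurable
    · refine Eventually.of_forall fun n => ae_of_all _ fun t _ => ?_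
      rw [Real.norm_eq_abs, abs_of_nonneg (poCut_nonneg _ _ _ _)]
      exact poCut_le_one _ _ _ _
    · simp
    · have : ∀ᵐ t : ℝ, t ≠ r₂ := by
        rw [ae_iff]; simp
      filter_upwards [this] with t ht _
      exact poCut_tendsto r₁ r₂ t ht
  convert hlim using 2
  rcases le_total s r₂ with h | h
  · rw [intervalIntegral.integral_of_le h, setIntegral_indicator measurableSet_Ioi,
      setIntegral_indicator measurableSet_Ioc]
    congr 2
    ext t; simp only [mem_inter_iff, mem_Ioc, mem_Ioi]; tauto
  · rw [intervalIntegral.integral_of_ge h, setIntegral_indicator measurableSet_Ioi,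
      setIntegral_indicator measurableSet_Ioc]
    have e1 : Ioc r₁ r₂ ∩ Ioi s = ∅ := by
      ext t; simp only [mem_inter_iff, mem_Ioc, mem_Ioi, mem_empty_iff_false]
      constructor
      · rintro ⟨⟨_, _⟩, _⟩; linarith
      · exact False.elim
    have e2 : Ioc r₂ s ∩ Ioc r₁ r₂ = ∅ := by
      ext t; simp only [mem_inter_iff, mem_Ioc, mem_empty_iff_false]
      constructor
      · rintro ⟨⟨_, _⟩, _, _⟩; linarith
      · exact False.elim
    rw [e1, e2]; simp

lemma hsNorm_nonneg (T : ℂ →L[ℝ] ℂ) : 0 ≤ hsNorm T := Real.sqrt_nonneg _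

lemma hsNorm_sq (T : ℂ →L[ℝ] ℂ) : hsNorm T ^ 2 = ‖T 1‖ ^ 2 + ‖T Complex.I‖ ^ 2 :=
  Real.sq_sqrt (by positivity)

lemma po_apply (T : ℂ →L[ℝ] ℂ) (w : ℂ) : T w = w.re • T 1 + w.im • T Complex.I := by
  rw [← map_smul, ← map_smul, ← map_add]
  congr 1
  apply Complex.ext <;> simp

lemma po_norm_sq (w : ℂ) : ‖w‖ ^ 2 = w.re ^ 2 + w.im ^ 2 := by
  rw [Complex.sq_norm, Complex.normSq_apply]; ring

lemma po_apply_bound (T : ℂ →L[ℝ] ℂ) (w : ℂ) (hw : ‖w‖ ≤ 1) : ‖T w‖ ^ 2 ≤ hsNorm T ^ 2 := by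
  have hw2 : w.re ^ 2 + w.im ^ 2 ≤ 1 := by
    rw [← po_norm_sq]; nlinarith [norm_nonneg w]
  have h1 : ‖T w‖ ≤ |w.re| * ‖T 1‖ + |w.im| * ‖T Complex.I‖ := by
    rw [po_apply T w]
    refine (norm_add_le _ _).trans ?_
    rw [norm_smul, norm_smul, Real.norm_eq_abs, Real.norm_eq_abs]
  rw [hsNorm_sq]
  have h2 : ‖T w‖ ^ 2 ≤ (|w.re| * ‖T 1‖ + |w.im| * ‖T Complex.I‖) ^ 2 := by gcongr
  have h3 : |w.re| ^ 2 + |w.im| ^ 2 ≤ 1 := by rwa [sq_abs, sq_abs]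
  have h5 := mul_le_mul_of_nonneg_right h3 (by positivity : 0 ≤ ‖T 1‖ ^ 2 + ‖T Complex.I‖ ^ 2)
  nlinarith [sq_nonneg (|w.re| * ‖T Complex.I‖ - |w.im| * ‖T 1‖)]

lemma po_rpow {p h : ℝ} (hp : 0 < p) (hh : 0 ≤ h) : h ^ (p - 2) * h ^ 2 = h ^ p := by
  rcases hh.eq_or_lt with rfl | h0
  · rw [Real.zero_rpow hp.ne']; simp
  · rw [← Real.rpow_natCast, ← Real.rpow_add h0]; norm_num

/-- the test field -/
noncomputable def poX (a : ℂ) (r₁ r₂ N : ℝ) (z : ℂ) : ℂ := poEta r₁ r₂ N ‖z - a‖ • (z - a)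

lemma poX_test (a : ℂ) (r₁ r₂ N : ℝ) (hN : 0 < N) (hr : 0 ≤ r₁)
    (hsub : ball a r₂ ⊆ ball (0 : ℂ) 2) : IsTestVF (ball (0 : ℂ) 2) (poX a r₁ r₂ N) := by
  have hsupp : Function.support (poX a r₁ r₂ N) ⊆ closedBall a (r₂ - 1 / N) := by
    intro z hz
    by_contra hcon
    apply hz
    rw [mem_closedBall, dist_eq_norm, not_le] at hcon
    unfold poX
    rw [poEta_right hN, zero_smul]
    have : N * (r₂ - ‖z - a‖) ≤ N * (1 / N) := by gcongr; linarith
    rwa [mul_one_div_cancel hN.ne'] at this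
  refine ⟨?_, ?_, ?_⟩
  · rw [contDiff_iff_contDiffAt]
    intro z
    by_cases hz : z = a
    · subst hz
      have : poX z r₁ r₂ N =ᶠ[𝓝 z] fun w => poEta r₁ r₂ N 0 • (w - z) := by
        filter_upwards [ball_mem_nhds z (by positivity : 0 < 1 / N)] with w hw
        rw [mem_ball, dist_eq_norm] at hw
        unfold poX
        rw [poEta_left hN hr (norm_nonneg _)]
        have : N * ‖w - z‖ ≤ N * (1 / N) := by gcongr
        rwa [mul_one_div_cancel hN.ne'] at this
      refine ContDiffAt.congr_of_eventuallyEq ?_ this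
      fun_prop
    · have hn : ContDiffAt ℝ (⊤ : ℕ∞) (fun w : ℂ => ‖w - a‖) z :=
        ContDiffAt.norm ℝ (by fun_prop) (sub_ne_zero.2 hz)
      exact ((poEta_contDiff r₁ r₂ N).contDiffAt.comp z hn).smul (by fun_prop)
  · exact HasCompactSupport.of_support_subset_isCompact (isCompact_closedBall _ _) hsupp
  · refine (closure_minimal hsupp isClosed_closedBall).trans ?_
    refine (closedBall_subset_ball ?_).trans hsub
    have : 0 < 1 / N := by positivity
    linarith

lemma poX_fderiv (a : ℂ) (r₁ r₂ N : ℝ) (z : ℂ) (hz : z ≠ a) (w : ℂ) :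
    fderiv ℝ (poX a r₁ r₂ N) z w = poEta r₁ r₂ N ‖z - a‖ • w -
      (poCut r₁ r₂ N ‖z - a‖ * ‖z - a‖⁻¹ * ((z - a).re * w.re + (z - a).im * w.im)) • (z - a) := by
  have hv : z - a ≠ 0 := sub_ne_zero.2 hz
  have hpos : 0 < ‖z - a‖ := norm_pos_iff.2 hv
  have h1 : HasFDerivAt (fun w : ℂ => w - a) (ContinuousLinearMap.id ℝ ℂ) z :=
    (hasFDerivAt_id z).sub_const a
  have h2 := h1.norm_sq
  have h3 := h2.sqrt (by positivity)
  have h4 := h3.congr_of_eventuallyEq (f₁ := fun w : ℂ => ‖w - a‖)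
    (Eventually.of_forall fun w => (Real.sqrt_sq (norm_nonneg _)).symm)
  have h5 := ((poEta_hasDerivAt r₁ r₂ N ‖z - a‖).comp_hasFDerivAt z h4).smul h1
  have h6 : fderiv ℝ (poX a r₁ r₂ N) z = _ := h5.fderiv
  rw [h6, Real.sqrt_sq (norm_nonneg _)]
  simp [Complex.inner]
  generalize ‖z - a‖ = ρ at *
  apply Complex.ext <;> simp <;> field_simp <;> ring

lemma po_pointwise (p : ℝ) (hp : 0 < p) (T : ℂ →L[ℝ] ℂ) (a : ℂ) (r₁ r₂ N : ℝ) (z : ℂ)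
    (hz : z ≠ a) :
    hsNorm T ^ p * ∑ i : Fin 2, rinner (cb i) (fderiv ℝ (poX a r₁ r₂ N) z (cb i)) -
        p * hsNorm T ^ (p - 2) *
          ∑ i : Fin 2, ∑ j : Fin 2,
            rinner (T (cb i)) (T (cb j)) *
              rinner (cb j) (fderiv ℝ (poX a r₁ r₂ N) z (cb i)) =
      (2 - p) * poEta r₁ r₂ N ‖z - a‖ * hsNorm T ^ p - poCut r₁ r₂ N ‖z - a‖ *
        (‖z - a‖ * (hsNorm T ^ p -
          p * hsNorm T ^ (p - 2) * ‖T (‖z - a‖⁻¹ • (z - a))‖ ^ 2)) := by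
  have hpos : 0 < ‖z - a‖ := norm_pos_iff.2 (sub_ne_zero.2 hz)
  have hsq := po_norm_sq (z - a)
  have hTν : ‖T (‖z - a‖⁻¹ • (z - a))‖ ^ 2 = (‖z - a‖⁻¹) ^ 2 * ‖T (z - a)‖ ^ 2 := by
    rw [map_smul, norm_smul, norm_inv, norm_norm, mul_pow]
  rw [hTν, po_apply T (z - a)]
  simp only [poX_fderiv a r₁ r₂ N z hz]
  have e := po_rpow hp (hsNorm_nonneg T)
  have e2 := hsNorm_sq T
  rw [po_norm_sq, po_norm_sq] at e2
  rw [po_norm_sq]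
  generalize poEta r₁ r₂ N ‖z - a‖ = η
  generalize poCut r₁ r₂ N ‖z - a‖ = χ
  generalize ‖z - a‖ = ρ at *
  generalize (z - a) = v at *
  rw [← e]
  generalize hsNorm T ^ (p - 2) = k at *
  generalize hsNorm T ^ 2 = hh at *
  have hcb0 : cb 0 = 1 := rfl
  have hcb1 : cb 1 = Complex.I := rfl
  simp only [Fin.sum_univ_two, hcb0, hcb1]
  generalize T 1 = A at *
  generalize T Complex.I = B at *
  have S1 : rinner 1 (η • 1 - (χ * ρ⁻¹ * (v.re * (1 : ℂ).re + v.im * (1 : ℂ).im)) • v) +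
      rinner Complex.I (η • Complex.I -
        (χ * ρ⁻¹ * (v.re * Complex.I.re + v.im * Complex.I.im)) • v) = 2 * η - χ * ρ := by
    have : χ * ρ = χ * ρ⁻¹ * (v.re ^ 2 + v.im ^ 2) := by
      rw [← hsq]; field_simp
    rw [this]
    simp [rinner]; ring
  rw [S1]
  have S2 : rinner A A * rinner 1 (η • 1 - (χ * ρ⁻¹ * (v.re * (1 : ℂ).re + v.im * (1 : ℂ).im)) • v) +
      rinner A B * rinner Complex.I
        (η • 1 - (χ * ρ⁻¹ * (v.re * (1 : ℂ).re + v.im * (1 : ℂ).im)) • v) +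
      (rinner B A * rinner 1 (η • Complex.I -
        (χ * ρ⁻¹ * (v.re * Complex.I.re + v.im * Complex.I.im)) • v) +
      rinner B B * rinner Complex.I (η • Complex.I -
        (χ * ρ⁻¹ * (v.re * Complex.I.re + v.im * Complex.I.im)) • v)) =
      η * hh - χ * ρ⁻¹ * ((v.re • A + v.im • B).re ^ 2 + (v.re • A + v.im • B).im ^ 2) := by
    rw [e2]
    simp [rinner]; ring
  rw [S2]
  field_simp
  ring

/-- **Lemma 6.4** (Pohozaev-type identity). Let `u ∈ W^{1,p}(D₂(0),S¹)` be a stationary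
`p`-harmonic map on the Euclidean disk `D₂(0) ⊆ ℝ² ≃ ℂ`, `p ∈ (1,2)`. Then on any
annulus `A_{r₁,r₂}(a) = D_{r₂}(a) ∖ D_{r₁}(a) ⊆ D₂(0)`,
`∫_{r₁}^{r₂} (∫_{D_r(a)} (2-p)|du|^p) dr
  = ∫_{A_{r₁,r₂}(a)} |z-a| (|du|^p - p|du|^{p-2}|du((z-a)/|z-a|)|²) dz`. -/
theorem pohozaev_identity
    (p : ℝ) (hp : p ∈ Set.Ioo (1 : ℝ) 2)
    (u : ℂ → ℂ) (du : ℂ → ℂ →L[ℝ] ℂ)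
    (hW : MemW1pS1 p (ball (0 : ℂ) 2) u du)
    (hstat : StatPHarm p (ball (0 : ℂ) 2) u du)
    (a : ℂ) (r₁ r₂ : ℝ) (hr₁ : 0 ≤ r₁) (hr₁₂ : r₁ ≤ r₂)
    (hsub : ball a r₂ ⊆ ball (0 : ℂ) 2) :
    (∫ r in Set.Ioc r₁ r₂, ∫ z in ball a r, (2 - p) * hsNorm (du z) ^ p) =
      ∫ z in ball a r₂ \ ball a r₁,
        ‖z - a‖ * (hsNorm (du z) ^ p -
          p * hsNorm (du z) ^ (p - 2) * ‖du z (‖z - a‖⁻¹ • (z - a))‖ ^ 2) := by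
  obtain ⟨hp1, hp2⟩ := hp
  have hp0 : 0 < p := by linarith
  obtain ⟨-, -, hdu, hint, -⟩ := hW
  set Ω := ball (0 : ℂ) 2 with hΩ
  set G : ℂ → ℝ := fun z => ‖z - a‖ * (hsNorm (du z) ^ p -
          p * hsNorm (du z) ^ (p - 2) * ‖du z (‖z - a‖⁻¹ • (z - a))‖ ^ 2) with hG
  have hρ : ∀ z ∈ Ω, ‖z - a‖ ≤ 2 + ‖a‖ := by
    intro z hz
    rw [hΩ, mem_ball_zero_iff] at hz
    exact (norm_sub_le _ _).trans (by linarith)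
  -- measurability
  have happ : ∀ f : ℂ → ℂ, Measurable f →
      AEStronglyMeasurable (fun z => du z (f z)) (volume.restrict Ω) := by
    intro f hf
    exact (isBoundedBilinearMap_apply (𝕜 := ℝ) (E := ℂ) (F := ℂ)).continuous.comp_aestronglyMeasurable
      (hdu.prodMk hf.aestronglyMeasurable)
  have hhs : AEMeasurable (fun z => hsNorm (du z)) (volume.restrict Ω) := by
    unfold hsNorm
    have h1 := (happ (fun _ => 1) measurable_const).aemeasurable
    have h2 := (happ (fun _ => Complex.I) measurable_const).aemeasurable
    exact ((h1.norm.pow_const 2).add (h2.norm.pow_const 2)).sqrt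
  have hGmeas : AEStronglyMeasurable G (volume.restrict Ω) := by
    have h1 := (happ (fun z => ‖z - a‖⁻¹ • (z - a)) (by fun_prop)).aemeasurable
    have h2 : AEMeasurable (fun z : ℂ => ‖z - a‖) (volume.restrict Ω) := by fun_prop
    exact (h2.mul ((hhs.pow_const p).sub (((hhs.pow_const (p - 2)).const_mul p).mul
      (h1.norm.pow_const 2)))).aestronglyMeasurable
  have hGbd : ∀ z ∈ Ω, ‖G z‖ ≤ (2 + ‖a‖) * (1 + p) * hsNorm (du z) ^ p := by
    intro z hz
    have hb := po_apply_bound (du z) (‖z - a‖⁻¹ • (z - a)) (by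
      rw [norm_smul, norm_inv, norm_norm]; exact inv_mul_le_one)
    have hk : 0 ≤ hsNorm (du z) ^ (p - 2) := Real.rpow_nonneg (hsNorm_nonneg _) _
    have hf : 0 ≤ hsNorm (du z) ^ p := Real.rpow_nonneg (hsNorm_nonneg _) _
    have h1 : p * hsNorm (du z) ^ (p - 2) * ‖du z (‖z - a‖⁻¹ • (z - a))‖ ^ 2 ≤
        p * hsNorm (du z) ^ p := by
      rw [← po_rpow hp0 (hsNorm_nonneg (du z)), ← mul_assoc]
      gcongr
    have h2 : 0 ≤ p * hsNorm (du z) ^ (p - 2) * ‖du z (‖z - a‖⁻¹ • (z - a))‖ ^ 2 := by positivity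
    rw [hG, norm_mul, norm_norm, mul_assoc (2 + ‖a‖)]
    apply mul_le_mul (hρ z hz) _ (norm_nonneg _) (by positivity)
    rw [Real.norm_eq_abs, abs_le]
    constructor <;> nlinarith
  have hGint : Integrable G (volume.restrict Ω) := by
    refine Integrable.mono' (hint.const_mul ((2 + ‖a‖) * (1 + p))) hGmeas ?_
    filter_upwards [ae_restrict_mem measurableSet_ball] with z hz using hGbd z hz
  have hne : ∀ c : ℂ, ∀ᵐ z ∂(volume.restrict Ω), z ≠ c := by
    intro c
    apply ae_restrict_of_ae
    rw [ae_iff]; simp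
  have hns : ∀ r : ℝ, ∀ᵐ z ∂(volume.restrict Ω), ‖z - a‖ ≠ r := by
    intro r
    apply ae_restrict_of_ae
    rw [ae_iff]
    have := Measure.addHaar_sphere (volume : Measure ℂ) a r
    convert this using 2
    ext z; simp [dist_eq_norm]
  have hηb : ∀ n : ℕ, ∀ z ∈ Ω, |poEta r₁ r₂ ((n : ℝ) + 1) ‖z - a‖| ≤ |r₂| + (2 + ‖a‖) := by
    intro n z hz
    refine (poEta_bound _ _ _ _).trans ((abs_sub _ _).trans ?_)
    rw [abs_norm]
    linarith [hρ z hz]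
  have hηm : ∀ n : ℕ, Measurable (fun z : ℂ => poEta r₁ r₂ ((n : ℝ) + 1) ‖z - a‖) := by
    intro n
    exact ((poEta_contDiff _ _ _).continuous.comp (by fun_prop)).measurable
  have hχm : ∀ n : ℕ, Measurable (fun z : ℂ => poCut r₁ r₂ ((n : ℝ) + 1) ‖z - a‖) := by
    intro n
    exact ((poCut_contDiff _ _ _).continuous.comp (by fun_prop)).measurable
  have hI1 : ∀ n : ℕ, Integrable (fun z => (2 - p) * poEta r₁ r₂ ((n : ℝ) + 1) ‖z - a‖ *
      hsNorm (du z) ^ p) (volume.restrict Ω) := by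
    intro n
    refine hint.bdd_mul (c := (2 - p) * (|r₂| + (2 + ‖a‖)))
      ((hηm n).const_mul _).aestronglyMeasurable ?_
    filter_upwards [ae_restrict_mem measurableSet_ball] with z hz
    rw [norm_mul, Real.norm_of_nonneg (by linarith : 0 ≤ 2 - p)]
    exact mul_le_mul_of_nonneg_left (hηb n z hz) (by linarith)
  have hI2 : ∀ n : ℕ, Integrable (fun z => poCut r₁ r₂ ((n : ℝ) + 1) ‖z - a‖ * G z)
      (volume.restrict Ω) := by
    intro n
    refine hGint.bdd_mul (c := 1) (hχm n).aestronglyMeasurable ?_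
    refine ae_of_all _ fun z => ?_
    rw [Real.norm_of_nonneg (poCut_nonneg _ _ _ _)]
    exact poCut_le_one _ _ _ _
  -- the identity for smooth cutoffs
  have hid : ∀ n : ℕ, ∫ z in Ω, (2 - p) * poEta r₁ r₂ ((n : ℝ) + 1) ‖z - a‖ * hsNorm (du z) ^ p =
      ∫ z in Ω, poCut r₁ r₂ ((n : ℝ) + 1) ‖z - a‖ * G z := by
    intro n
    have h := hstat.2 _ (poX_test a r₁ r₂ ((n : ℝ) + 1) (by positivity) hr₁ hsub)
    rw [← sub_eq_zero, ← integral_sub (hI1 n) (hI2 n), ← h]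
    apply integral_congr_ae
    filter_upwards [hne a] with z hz
    exact (po_pointwise p hp0 (du z) a r₁ r₂ _ z hz).symm
  -- limits
  have hL : Tendsto (fun n : ℕ => ∫ z in Ω, (2 - p) * poEta r₁ r₂ ((n : ℝ) + 1) ‖z - a‖ *
      hsNorm (du z) ^ p) atTop (𝓝 (∫ z in Ω, (2 - p) *
        (∫ t in Ioc r₁ r₂, (Ioi ‖z - a‖).indicator (fun _ => (1 : ℝ)) t) * hsNorm (du z) ^ p)) := by
    apply tendsto_integral_of_dominated_convergence
      (fun z => (2 - p) * (|r₂| + (2 + ‖a‖)) * hsNorm (du z) ^ p)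
    · exact fun n => (hI1 n).aestronglyMeasurable
    · exact hint.const_mul _
    · intro n
      filter_upwards [ae_restrict_mem measurableSet_ball] with z hz
      rw [norm_mul, norm_mul, Real.norm_of_nonneg (by linarith : 0 ≤ 2 - p),
        Real.norm_of_nonneg (Real.rpow_nonneg (hsNorm_nonneg _) _)]
      have := hηb n z hz
      have hf : 0 ≤ hsNorm (du z) ^ p := Real.rpow_nonneg (hsNorm_nonneg _) _
      have : 0 ≤ 2 - p := by linarith
      rw [Real.norm_eq_abs]
      gcongr
    · exact ae_of_all _ fun z => ((poEta_tendsto r₁ r₂ ‖z - a‖).const_mul _).mul_const _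
  have hR : Tendsto (fun n : ℕ => ∫ z in Ω, poCut r₁ r₂ ((n : ℝ) + 1) ‖z - a‖ * G z) atTop
      (𝓝 (∫ z in Ω, (Ioc r₁ r₂).indicator (fun _ => (1 : ℝ)) ‖z - a‖ * G z)) := by
    apply tendsto_integral_of_dominated_convergence (fun z => ‖G z‖)
    · exact fun n => (hI2 n).aestronglyMeasurable
    · exact hGint.norm
    · intro n
      refine ae_of_all _ fun z => ?_
      rw [norm_mul, Real.norm_of_nonneg (poCut_nonneg _ _ _ _)]
      exact mul_le_of_le_one_left (norm_nonneg _) (poCut_le_one _ _ _ _)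
    · filter_upwards [hns r₂] with z hz
      exact (poCut_tendsto r₁ r₂ _ hz).mul_const _
  have hlim := tendsto_nhds_unique (hL.congr hid) hR
  -- right-hand side
  have hRHS : ∫ z in ball a r₂ \ ball a r₁, G z =
      ∫ z in Ω, (Ioc r₁ r₂).indicator (fun _ => (1 : ℝ)) ‖z - a‖ * G z := by
    have hms : MeasurableSet (ball a r₂ \ ball a r₁) := measurableSet_ball.diff measurableSet_ball
    have hss : ball a r₂ \ ball a r₁ = Ω ∩ (ball a r₂ \ ball a r₁) :=
      (inter_eq_right.2 (sdiff_subset.trans hsub)).symm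
    rw [hss, ← setIntegral_indicator hms]
    apply integral_congr_ae
    filter_upwards [hns r₁, hns r₂] with z h1 h2
    by_cases hz : z ∈ ball a r₂ \ ball a r₁
    · rw [indicator_of_mem hz, indicator_of_mem, one_mul]
      simp only [Set.mem_sdiff, mem_ball, dist_eq_norm, not_lt] at hz
      exact ⟨lt_of_le_of_ne hz.2 h1.symm, hz.1.le⟩
    · rw [indicator_of_notMem hz, indicator_of_notMem, zero_mul]
      intro h3
      apply hz
      simp only [Set.mem_sdiff, mem_ball, dist_eq_norm, not_lt]
      exact ⟨lt_of_le_of_ne h3.2 h2, h3.1.le⟩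
  -- left-hand side
  have hLHS : (∫ r in Set.Ioc r₁ r₂, ∫ z in ball a r, (2 - p) * hsNorm (du z) ^ p) =
      ∫ z in Ω, (2 - p) *
        (∫ t in Ioc r₁ r₂, (Ioi ‖z - a‖).indicator (fun _ => (1 : ℝ)) t) * hsNorm (du z) ^ p := by
    have e1 : (∫ r in Set.Ioc r₁ r₂, ∫ z in ball a r, (2 - p) * hsNorm (du z) ^ p) =
        ∫ r in Set.Ioc r₁ r₂, ∫ z in Ω, (Ioi ‖z - a‖).indicator (fun _ => (1 : ℝ)) r *
          ((2 - p) * hsNorm (du z) ^ p) := by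
      apply setIntegral_congr_fun measurableSet_Ioc
      intro r hr
      have hss : ball a r = Ω ∩ ball a r :=
        (inter_eq_right.2 ((ball_subset_ball hr.2).trans hsub)).symm
      beta_reduce
      rw [hss, ← setIntegral_indicator measurableSet_ball]
      congr 1
      ext z
      by_cases hz : z ∈ ball a r
      · rw [indicator_of_mem hz, indicator_of_mem, one_mul]
        simpa [dist_eq_norm] using hz
      · rw [indicator_of_notMem hz, indicator_of_notMem, zero_mul]
        simpa [dist_eq_norm] using hz
    rw [e1, integral_integral_swap]
    · congr 1
      ext z
      rw [integral_mul_const]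
      ring
    · have hconst : Integrable (fun _ : ℝ => (1 : ℝ)) (volume.restrict (Ioc r₁ r₂)) :=
        integrable_const _
      have h1 := hconst.mul_prod (hint.const_mul (2 - p))
      have hS : MeasurableSet {q : ℝ × ℂ | ‖q.2 - a‖ < q.1} :=
        measurableSet_lt (by fun_prop) (by fun_prop)
      refine (h1.indicator hS).congr (ae_of_all _ fun q => ?_)
      by_cases hq : ‖q.2 - a‖ < q.1
      · rw [indicator_of_mem (by exact hq)]
        simp [Function.uncurry, hq]
      · rw [indicator_of_notMem (by exact hq)]
        simp [Function.uncurry, hq]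
  rw [hLHS, hlim, hRHS]
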